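/- Let r be an odd prime, m ≥ 1, G an extraspecial group of order r^{1+2m} and exponent r, and A = G ⋊ Sp(2m, r) where Sp(2m,r) acts on G fixing Z(G) and inducing on G/Z(G) ≅ F_r^{2m} its natural action. Let U be any subgroup of G properly containing Z(G). Then P_A(U) = P_A(G). -/

import Mathlib

/-- The `A`-prime-power-covering set of a subgroup `H` of `A`. -/
def ppcSet {A : Type*} [Group A] (H : Subgroup A) : Set A :=
  {y | ∃ x ∈ H, (∃ p k : ℕ, p.Prime ∧ orderOf x = p ^ k) ∧ ∃ a : A, a⁻¹ * x * a = y}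

open Matrix in
theorem aux_J_vec {m : ℕ} {F : Type*} [Field F] (v : Fin m ⊕ Fin m → F) :
    J (Fin m) F *ᵥ v = -(v ᵥ* J (Fin m) F) := by
  rw [← Matrix.mulVec_transpose, Matrix.J_transpose, Matrix.neg_mulVec, neg_neg]

open Matrix in
theorem aux_vec_J {m : ℕ} {F : Type*} [Field F] (v : Fin m ⊕ Fin m → F) :
    v ᵥ* J (Fin m) F = Sum.elim (fun i => v (Sum.inr i)) (fun i => - v (Sum.inl i)) := by
  obtain ⟨a, b, rfl⟩ : ∃ a b, v = Sum.elim a b :=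
    ⟨v ∘ Sum.inl, v ∘ Sum.inr, by simp⟩
  rw [Matrix.J, Matrix.vecMul_fromBlocks]
  ext i
  rcases i with i | i <;> simp [Matrix.vecMul_neg]

open Matrix in
theorem aux_alt {m : ℕ} {F : Type*} [Field F] (v : Fin m ⊕ Fin m → F) :
    (v ᵥ* J (Fin m) F) ⬝ᵥ v = 0 := by
  rw [aux_vec_J]
  simp [dotProduct, Fintype.sum_sum_type, mul_comm]

open Matrix in
theorem aux_skew {m : ℕ} {F : Type*} [Field F] (v w : Fin m ⊕ Fin m → F) :
    (v ᵥ* J (Fin m) F) ⬝ᵥ w = - ((w ᵥ* J (Fin m) F) ⬝ᵥ v) := by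
  rw [← Matrix.dotProduct_mulVec, aux_J_vec, dotProduct_neg, dotProduct_comm]

open Matrix in
theorem aux_nondeg {m : ℕ} {F : Type*} [Field F] (v : Fin m ⊕ Fin m → F) (hv : v ≠ 0) :
    ∃ w, (v ᵥ* J (Fin m) F) ⬝ᵥ w ≠ 0 := by
  by_contra! h
  apply hv
  have h0 : v ᵥ* J (Fin m) F = 0 := dotProduct_eq_zero _ h
  rw [aux_vec_J] at h0
  ext i
  rcases i with i | i
  · simpa using congrFun h0 (Sum.inr i)
  · simpa using congrFun h0 (Sum.inl i)

open Matrix in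
theorem aux_transv {m : ℕ} {F : Type*} [Field F] (v : Fin m ⊕ Fin m → F) (c : F) :
    1 + c • vecMulVec v (v ᵥ* J (Fin m) F) ∈ symplecticGroup (Fin m) F := by
  rw [SymplecticGroup.mem_iff']
  have e1 : vecMulVec (v ᵥ* J (Fin m) F) v * J (Fin m) F
      = vecMulVec (v ᵥ* J (Fin m) F) (v ᵥ* J (Fin m) F) := by
    rw [Matrix.vecMulVec_mul]
  have e2 : J (Fin m) F * vecMulVec v (v ᵥ* J (Fin m) F)
      = - vecMulVec (v ᵥ* J (Fin m) F) (v ᵥ* J (Fin m) F) := by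
    rw [Matrix.mul_vecMulVec, aux_J_vec, Matrix.neg_vecMulVec]
  have e3 : vecMulVec (v ᵥ* J (Fin m) F) (v ᵥ* J (Fin m) F) * vecMulVec v (v ᵥ* J (Fin m) F)
      = 0 := by
    rw [Matrix.vecMulVec_mul_vecMulVec, aux_alt]
    simp
  rw [transpose_add, transpose_one, transpose_smul, transpose_vecMulVec]
  simp [add_mul, mul_add, e1, e2, e3]

open Matrix in
theorem aux_step {m : ℕ} {F : Type*} [Field F] (x y : Fin m ⊕ Fin m → F)
    (h : (x ᵥ* J (Fin m) F) ⬝ᵥ y ≠ 0) :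
    ∃ S : symplecticGroup (Fin m) F,
      (S : Matrix (Fin m ⊕ Fin m) (Fin m ⊕ Fin m) F) *ᵥ x = y := by
  refine ⟨⟨_, aux_transv (y - x) ((y ᵥ* J (Fin m) F) ⬝ᵥ x)⁻¹⟩, ?_⟩
  have h' : (y ᵥ* J (Fin m) F) ⬝ᵥ x ≠ 0 := by
    rw [aux_skew]; exact neg_ne_zero.mpr h
  have e : ((y - x) ᵥ* J (Fin m) F) ⬝ᵥ x = (y ᵥ* J (Fin m) F) ⬝ᵥ x := by
    rw [sub_vecMul, sub_dotProduct, aux_alt, sub_zero]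
  ext i
  simp only [add_mulVec, one_mulVec, smul_mulVec, vecMulVec_mulVec, e]
  simp
  field_simp
  ring

open Matrix in
theorem aux_trans {m : ℕ} {F : Type*} [Field F] (x y : Fin m ⊕ Fin m → F)
    (hx : x ≠ 0) (hy : y ≠ 0) :
    ∃ S : symplecticGroup (Fin m) F,
      (S : Matrix (Fin m ⊕ Fin m) (Fin m ⊕ Fin m) F) *ᵥ x = y := by
  have key : ∃ z, (x ᵥ* J (Fin m) F) ⬝ᵥ z ≠ 0 ∧ (y ᵥ* J (Fin m) F) ⬝ᵥ z ≠ 0 := by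
    obtain ⟨a, ha⟩ := aux_nondeg x hx
    obtain ⟨b, hb⟩ := aux_nondeg y hy
    by_cases h1 : (y ᵥ* J (Fin m) F) ⬝ᵥ a = 0
    · by_cases h2 : (x ᵥ* J (Fin m) F) ⬝ᵥ b = 0
      · exact ⟨a + b, by rwa [dotProduct_add, h2, add_zero],
          by rwa [dotProduct_add, h1, zero_add]⟩
      · exact ⟨b, h2, hb⟩
    · exact ⟨a, ha, h1⟩
  obtain ⟨z, h1, h2⟩ := key
  obtain ⟨S, hS⟩ := aux_step x z h1
  obtain ⟨T, hT⟩ := aux_step z y (by rw [aux_skew]; exact neg_ne_zero.mpr h2)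
  refine ⟨T * S, ?_⟩
  rw [← hT, ← hS]
  simp [mulVec_mulVec]

theorem stmt16 (r : ℕ) (hr : r.Prime) (hodd : Odd r) (m : ℕ) (hm : 1 ≤ m)
    -- `G` is extraspecial of order `r^(1+2m)` and exponent `r` :
    (G : Type*) [Group G] [Finite G]
    (hcard : Nat.card G = r ^ (1 + 2 * m))
    (hexp : ∀ g : G, g ^ r = 1)
    (hZcard : Nat.card (Subgroup.center G) = r)
    (hZcomm : Subgroup.center G = commutator G)
    -- `Sp(2m, r)` acts on `G` fixing the center pointwise :
    (φ : Matrix.symplecticGroup (Fin m) (ZMod r) →* MulAut G)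
    (hfix : ∀ (S : Matrix.symplecticGroup (Fin m) (ZMod r)) (z : G),
      z ∈ Subgroup.center G → φ S z = z)
    -- and inducing on `G/Z(G) ≅ (ZMod r)^{2m}` its natural action :
    (ι : (G ⧸ Subgroup.center G) ≃* Multiplicative ((Fin m ⊕ Fin m) → ZMod r))
    (hnat : ∀ (S : Matrix.symplecticGroup (Fin m) (ZMod r)) (g : G),
      ι (QuotientGroup.mk (φ S g)) =
        Multiplicative.ofAdd
          (Matrix.mulVec (S : Matrix (Fin m ⊕ Fin m) (Fin m ⊕ Fin m) (ZMod r))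
            (ι (QuotientGroup.mk g)).toAdd))
    -- `U` is any subgroup of `G` properly containing the center :
    (U : Subgroup G) (hU : Subgroup.center G < U) :
    ppcSet (Subgroup.map (SemidirectProduct.inl (φ := φ)) U)
      = ppcSet (SemidirectProduct.inl (φ := φ)).range := by
  haveI : Fact r.Prime := ⟨hr⟩
  have key : ∀ g : G, ∃ u ∈ U, ∃ S, φ S u = g := by
    intro g
    by_cases hg : g ∈ Subgroup.center G
    · exact ⟨g, hU.le hg, 1, by simp⟩
    obtain ⟨u, huU, huZ⟩ := SetLike.exists_of_lt hU
    have nz : ∀ k : G, k ∉ Subgroup.center G →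
        (ι (QuotientGroup.mk k)).toAdd ≠ 0 := by
      intro k hk h0
      apply hk
      rw [← QuotientGroup.eq_one_iff]
      apply ι.injective
      rw [map_one]
      exact h0
    obtain ⟨S, hS⟩ := aux_trans _ _ (nz u huZ) (nz g hg)
    have h1 := hnat S u
    rw [hS] at h1
    have h2 : (QuotientGroup.mk (φ S u) : G ⧸ Subgroup.center G) = QuotientGroup.mk g :=
      ι.injective h1
    have h3 := QuotientGroup.eq.mp h2
    refine ⟨u * ((φ S u)⁻¹ * g), U.mul_mem huU (hU.le h3), S, ?_⟩
    rw [map_mul, hfix S _ h3]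
    group
  ext y
  constructor
  · rintro ⟨x, ⟨u, hu, rfl⟩, hord, a, ha⟩
    exact ⟨_, ⟨u, rfl⟩, hord, a, ha⟩
  · rintro ⟨x, ⟨g, rfl⟩, hord, a, ha⟩
    obtain ⟨u, hu, S, rfl⟩ := key g
    rw [SemidirectProduct.inl_aut] at hord ha
    refine ⟨_, ⟨u, hu, rfl⟩, ?_, (SemidirectProduct.inr S)⁻¹ * a, ?_⟩
    · obtain ⟨p, k, hp, hk⟩ := hord
      refine ⟨p, k, hp, ?_⟩
      rw [← hk, map_inv]
      exact (MulAut.conj (SemidirectProduct.inr S)).orderOf_eq _ |>.symm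
    · rw [← ha, map_inv]
      group
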